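/- Let A, B ⊆ [m] with 2 ≤ |A| + |B| ≤ 2m − 1, D = Δ_A + wΔ_B, and D^c = (F_4^m \ {0}) \ D. Then C_{D^c} has length 4^m − 2^{|A|+|B|}, exactly 4^m distinct codewords (dimension m over F_4), and minimum distance d = 3·2^{2m−2} − 3·2^{|A|+|B|−2}; the multiset {wt(c_{D^c}(x)) : x ∈ F_4^m} consists of: 0 once; d with multiplicity 4^{m−|A∪B|}(4^{|A∪B|} − 1 − 3(2^{|A\B|+|B\A|} − 1)); 3·2^{2m−2} − 2^{|A|+|B|−1} with multiplicity 3·4^{m−|A∪B|}(2^{|A\B|+|B\A|} − 1); and 3·2^{2m−2} with multiplicity 4^{m−|A∪B|} − 1. Moreover C_{D^c} is a Griesmer code: Σ_{i=0}^{m−1} ⌈d/4^i⌉ = 4^m − 2^{|A|+|B|}. -/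

import Mathlib

open Finset

/-- The support of a binary vector, as a finset of coordinates. -/
def supp {m : ℕ} (v : Fin m → ZMod 2) : Finset (Fin m) :=
  Finset.univ.filter (fun i => v i ≠ 0)

/-- The simplicial complex generated by `A`: all binary vectors with support contained in `A`. -/
def delta {m : ℕ} (A : Finset (Fin m)) : Finset (Fin m → ZMod 2) :=
  Finset.univ.filter (fun v => supp v ⊆ A)

variable {F : Type} [Field F] [Fintype F] [DecidableEq F]

/-- The embedding of `F_2 = {0,1}` into a field `F`. -/
def e2 (a : ZMod 2) : F := (a.val : F)

/-- The inner product `x·d = Σ x_i d_i` of two vectors over `F`. -/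
def dotF {m : ℕ} (x d : Fin m → F) : F := ∑ i, x i * d i

/-- The quaternary vector `d_1 + w·d_2` attached to a pair of binary vectors. -/
def dvec {m : ℕ} (w : F) (p : (Fin m → ZMod 2) × (Fin m → ZMod 2)) : Fin m → F :=
  fun i => e2 (p.1 i) + w * e2 (p.2 i)

/-- The Hamming weight of the codeword `c_D(x) = (x·d)_{d∈D}`. -/
def wtF {m : ℕ} (D : Finset (Fin m → F)) (x : Fin m → F) : ℕ :=
  (D.filter (fun d => dotF x d ≠ 0)).card

/-- The codeword `c_D(x) = (x·d)_{d∈D}` of the code with defining set `D`. -/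
def codeword {m : ℕ} (D : Finset (Fin m → F)) (x : Fin m → F) : {d // d ∈ D} → F :=
  fun d => dotF x d.1

section Helpers

set_option linter.unusedSectionVars false

theorem two_eq_zero_F (hF : Fintype.card F = 4) : (2 : F) = 0 := by
  have h : ((Fintype.card F : ℕ) : F) = 0 := Nat.cast_card_eq_zero F
  rw [hF] at h
  have h' : (2 : F) * 2 = 0 := by
    have : (2 : F) * 2 = ((4 : ℕ) : F) := by norm_num
    rw [this, h]
  rcases mul_eq_zero.mp h' with h | h <;> exact h

theorem add_self_F (h2 : (2 : F) = 0) (y : F) : y + y = 0 := by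
  rw [← two_mul, h2, zero_mul]

theorem e2_zero : (e2 0 : F) = 0 := by simp [e2]

theorem e2_one : (e2 1 : F) = 1 := by
  have : (1 : ZMod 2).val = 1 := rfl
  simp [e2, this]

theorem zmod2_cases (a : ZMod 2) : a = 0 ∨ a = 1 := by
  revert a; decide

theorem e2_add (h2 : (2 : F) = 0) (a b : ZMod 2) : (e2 (a + b) : F) = e2 a + e2 b := by
  have h11 : (1 : ZMod 2) + 1 = 0 := rfl
  rcases zmod2_cases a with rfl | rfl <;> rcases zmod2_cases b with rfl | rfl <;>
    simp [e2_zero, e2_one, h11, add_self_F h2]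

theorem w_ne_zero {w : F} (hw : w ^ 2 + w + 1 = 0) : w ≠ 0 := by
  rintro rfl; simp at hw

theorem w_ne_one (h2 : (2 : F) = 0) {w : F} (hw : w ^ 2 + w + 1 = 0) : w ≠ 1 := by
  rintro rfl
  have : (1 : F) = 0 := by linear_combination hw - h2
  exact one_ne_zero this

theorem e2_pair_inj (h2 : (2 : F) = 0) {w : F} (hw : w ^ 2 + w + 1 = 0) {a b a' b' : ZMod 2}
    (h : (e2 a + w * e2 b : F) = e2 a' + w * e2 b') : a = a' ∧ b = b' := by
  have h0 := w_ne_zero hw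
  have h1 := w_ne_one h2 hw
  have h3 : 1 + w ≠ 0 := by
    intro h
    apply h1
    linear_combination h - h2
  rcases zmod2_cases a with rfl | rfl <;> rcases zmod2_cases b with rfl | rfl <;>
  rcases zmod2_cases a' with rfl | rfl <;> rcases zmod2_cases b' with rfl | rfl <;>
  simp [e2_zero, e2_one] at h ⊢ <;> first | exact h0 h | exact h0 h.symm | exact h1 h | exact h1 h.symm | exact h3 h | exact h3 h.symm

theorem dvec_inj (h2 : (2 : F) = 0) {w : F} (hw : w ^ 2 + w + 1 = 0) {m : ℕ} :
    Function.Injective (dvec (m := m) w) := by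
  rintro ⟨p1, p2⟩ ⟨q1, q2⟩ h
  have h' := fun i => e2_pair_inj h2 hw (congrFun h i)
  ext i
  · exact (h' i).1
  · exact (h' i).2

theorem dotF_add {m : ℕ} (x d e : Fin m → F) : dotF x (d + e) = dotF x d + dotF x e := by
  simp [dotF, mul_add, Finset.sum_add_distrib]

theorem dotF_sub_left {m : ℕ} (x y d : Fin m → F) : dotF (x - y) d = dotF x d - dotF y d := by
  simp [dotF, sub_mul, Finset.sum_sub_distrib]

theorem dvec_add (h2 : (2 : F) = 0) (w : F) {m : ℕ} (p q : (Fin m → ZMod 2) × (Fin m → ZMod 2)) :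
    dvec w (p + q) = dvec w p + dvec w q := by
  funext i
  simp [dvec, e2_add h2]
  ring

/-- Pairing with `x` on pairs of binary vectors. -/
def phiHom (h2 : (2 : F) = 0) (w : F) {m : ℕ} (x : Fin m → F) :
    ((Fin m → ZMod 2) × (Fin m → ZMod 2)) →+ F :=
  AddMonoidHom.mk' (fun p => dotF x (dvec w p))
    (fun p q => by rw [dvec_add h2, dotF_add])

/-- Pairing with `x` on vectors. -/
def dotHom {m : ℕ} (x : Fin m → F) : (Fin m → F) →+ F :=
  AddMonoidHom.mk' (fun p => dotF x p) (fun p q => by rw [dotF_add])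

theorem mem_delta {m : ℕ} {A : Finset (Fin m)} {v : Fin m → ZMod 2} :
    v ∈ delta A ↔ ∀ i, i ∉ A → v i = 0 := by
  simp only [delta, supp, Finset.mem_filter, Finset.mem_univ, true_and, Finset.subset_iff]
  constructor
  · intro h i hi; by_contra h'; exact hi (h h')
  · intro h i hi; by_contra h'; exact hi (h i h')

theorem card_delta {m : ℕ} (A : Finset (Fin m)) : (delta A).card = 2 ^ A.card := by
  have : delta A = Fintype.piFinset (fun i => if i ∈ A then (Finset.univ : Finset (ZMod 2)) else {0}) := by
    ext v
    rw [mem_delta, Fintype.mem_piFinset]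
    apply forall_congr'
    intro i
    by_cases h : i ∈ A <;> simp [h]
  rw [this, Fintype.card_piFinset]
  have h3 : ∀ i, (if i ∈ A then (Finset.univ : Finset (ZMod 2)) else {0}).card
      = if i ∈ A then 2 else 1 := by
    intro i; split_ifs <;> simp [ZMod.card]
  simp only [h3]
  rw [Finset.prod_ite_mem]
  simp

/-- The subgroup of pairs. -/
def pairSub {m : ℕ} (A B : Finset (Fin m)) :
    AddSubgroup ((Fin m → ZMod 2) × (Fin m → ZMod 2)) where
  carrier := {p | p ∈ delta A ×ˢ delta B}
  zero_mem' := by simp [mem_delta]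
  add_mem' := by
    intro p q hp hq
    simp only [Set.mem_ofPred_eq, Finset.mem_product, mem_delta] at *
    refine ⟨fun i hi => ?_, fun i hi => ?_⟩
    · simp [hp.1 i hi, hq.1 i hi]
    · simp [hp.2 i hi, hq.2 i hi]
  neg_mem' := by
    intro p hp
    simp only [Set.mem_ofPred_eq, Finset.mem_product, mem_delta] at *
    refine ⟨fun i hi => ?_, fun i hi => ?_⟩
    · simp [hp.1 i hi]
    · simp [hp.2 i hi]

/-- Rank-nullity for finite subgroups given by finsets. -/
theorem rank_nullity {G : Type} [AddCommGroup G] [DecidableEq G] (P : AddSubgroup G) (S : Finset G)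
    (hS : ∀ p, p ∈ P ↔ p ∈ S) (f : G →+ F) :
    (S.filter (fun p => f p = 0)).card * Nat.card (P.map f) = S.card := by
  have h1 := (f.comp P.subtype).ker.card_mul_index
  rw [AddSubgroup.index_ker] at h1
  have hr : (f.comp P.subtype).range = P.map f := by
    rw [AddMonoidHom.range_comp, AddSubgroup.range_subtype]
  rw [hr] at h1
  have hP : Nat.card P = S.card := by
    have hc : Nat.card (S : Set G) = S.card := by simp
    rw [← hc]
    apply Nat.card_congr
    exact Equiv.subtypeEquivRight (fun p => by simpa using hS p)
  have hk : Nat.card (f.comp P.subtype).ker = (S.filter (fun p => f p = 0)).card := by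
    have hc : Nat.card ((S.filter (fun p => f p = 0) : Finset G) : Set G)
        = (S.filter (fun p => f p = 0)).card := by
      rw [Nat.card_coe_set_eq, Set.ncard_coe_finset]
    rw [← hc]
    refine Nat.card_congr ⟨fun p => ⟨p.1.1, ?_⟩, fun p => ⟨⟨p.1, ?_⟩, ?_⟩, fun p => rfl, fun p => rfl⟩
    · have := p.2
      rw [AddMonoidHom.mem_ker] at this
      simpa [← hS] using this
    · have := p.2
      simp only [Finset.coe_filter, Set.mem_ofPred_eq] at this
      exact (hS _).2 this.1
    · have := p.2
      simp only [Finset.coe_filter, Set.mem_ofPred_eq] at this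
      rw [AddMonoidHom.mem_ker]
      exact this.2
  rw [hP, hk] at h1
  exact h1

/-- The subgroup `{0,u}`. -/
def Hu (h2 : (2 : F) = 0) (u : F) : AddSubgroup F where
  carrier := {y | y = 0 ∨ y = u}
  zero_mem' := Or.inl rfl
  add_mem' := by
    rintro a b (rfl | rfl) (rfl | rfl) <;> simp [add_self_F h2]
  neg_mem' := by
    rintro a (rfl | rfl)
    · simp
    · right; exact neg_eq_of_add_eq_zero_left (add_self_F h2 a)

theorem mem_Hu (h2 : (2 : F) = 0) (u y : F) : y ∈ Hu h2 u ↔ y = 0 ∨ y = u := Iff.rfl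

theorem map_le_iff (h2 : (2 : F) = 0) (w : F) {m : ℕ} (A B : Finset (Fin m)) (x : Fin m → F)
    (H : AddSubgroup F) : (pairSub A B).map (phiHom h2 w x) ≤ H ↔
      ∀ i, (i ∈ A → x i ∈ H) ∧ (i ∈ B → w * x i ∈ H) := by
  rw [AddSubgroup.map_le_iff_le_comap]
  constructor
  · intro h i
    constructor
    · intro hi
      have h1 : ((Pi.single i 1, 0) : (Fin m → ZMod 2) × (Fin m → ZMod 2)) ∈ pairSub A B := by
        change _ ∈ delta A ×ˢ delta B
        simp only [Finset.mem_product, mem_delta]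
        refine ⟨fun j hj => ?_, fun j hj => rfl⟩
        rw [Pi.single_eq_of_ne]; rintro rfl; exact hj hi
      have h3 := h h1
      rw [AddSubgroup.mem_comap] at h3
      convert h3 using 1
      change _ = dotF _ _
      rw [dotF, Finset.sum_eq_single i]
      · simp [dvec, e2_zero, e2_one]
      · intro j _ hj
        simp [dvec, e2_zero, hj]
      · simp
    · intro hi
      have h1 : ((0, Pi.single i 1) : (Fin m → ZMod 2) × (Fin m → ZMod 2)) ∈ pairSub A B := by
        change _ ∈ delta A ×ˢ delta B
        simp only [Finset.mem_product, mem_delta]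
        refine ⟨fun j hj => rfl, fun j hj => ?_⟩
        rw [Pi.single_eq_of_ne]; rintro rfl; exact hj hi
      have h3 := h h1
      rw [AddSubgroup.mem_comap] at h3
      convert h3 using 1
      change _ = dotF _ _
      rw [dotF, Finset.sum_eq_single i]
      · simp [dvec, e2_zero, e2_one, mul_comm]
      · intro j _ hj
        simp [dvec, e2_zero, hj]
      · simp
  · intro h p hp
    change p ∈ delta A ×ˢ delta B at hp
    simp only [Finset.mem_product, mem_delta] at hp
    rw [AddSubgroup.mem_comap]
    change dotF _ _ ∈ H
    apply AddSubgroup.sum_mem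
    intro i _
    rw [dvec, mul_add]
    apply AddSubgroup.add_mem
    · rcases zmod2_cases (p.1 i) with h0 | h0
      · simp [h0, e2_zero]
      · rw [h0, e2_one, mul_one]
        apply (h i).1
        by_contra hi
        rw [hp.1 i hi] at h0
        exact absurd h0 (by decide)
    · rcases zmod2_cases (p.2 i) with h0 | h0
      · simp [h0, e2_zero]
      · rw [h0, e2_one, mul_one, mul_comm]
        apply (h i).2
        by_contra hi
        rw [hp.2 i hi] at h0
        exact absurd h0 (by decide)

/-- Vectors `x` with range inside `{0,u}`. -/
def Nset {m : ℕ} (w : F) (A B : Finset (Fin m)) (u : F) : Finset (Fin m → F) :=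
  Finset.univ.filter (fun x => ∀ i, (i ∈ A → x i = 0 ∨ x i = u) ∧ (i ∈ B → w * x i = 0 ∨ w * x i = u))

theorem mem_Nset (h2 : (2 : F) = 0) {m : ℕ} (w : F) (A B : Finset (Fin m)) (u : F) (x : Fin m → F) :
    x ∈ Nset w A B u ↔ (pairSub A B).map (phiHom h2 w x) ≤ Hu h2 u := by
  rw [map_le_iff]
  simp [Nset, mem_Hu]

theorem card_Nset_zero (hF : Fintype.card F = 4) {w : F} (h0 : w ≠ 0) {m : ℕ}
    (A B : Finset (Fin m)) : (Nset w A B 0).card = 4 ^ (m - (A ∪ B).card) := by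
  have : Nset w A B 0 = Fintype.piFinset
      (fun i => if i ∈ (A ∪ B)ᶜ then (Finset.univ : Finset F) else {0}) := by
    ext v
    rw [Fintype.mem_piFinset]
    simp only [Nset, Finset.mem_filter, Finset.mem_univ, true_and]
    apply forall_congr'
    intro i
    by_cases h : i ∈ A <;> by_cases h' : i ∈ B <;> simp [h, h', h0]
  rw [this, Fintype.card_piFinset]
  have h3 : ∀ i, (if i ∈ (A ∪ B)ᶜ then (Finset.univ : Finset F) else {0}).card
      = if i ∈ (A ∪ B)ᶜ then 4 else 1 := by
    intro i; split_ifs <;> simp [hF]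
  simp only [h3]
  rw [Finset.prod_ite_mem]
  rw [Finset.univ_inter, Finset.prod_const, Finset.card_compl, Fintype.card_fin]

theorem card_Nset (h2 : (2 : F) = 0) (hF : Fintype.card F = 4) {w : F} (h0 : w ≠ 0) (h1 : w ≠ 1)
    {m : ℕ} (A B : Finset (Fin m)) {u : F} (hu : u ≠ 0) :
    (Nset w A B u).card = 4 ^ (m - (A ∪ B).card) * 2 ^ ((A \ B).card + (B \ A).card) := by
  have key : Nset w A B u = Fintype.piFinset
      (fun i => Finset.univ.filter (fun y : F => (i ∈ A → y = 0 ∨ y = u) ∧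
        (i ∈ B → w * y = 0 ∨ w * y = u))) := by
    ext v
    simp [Nset, Fintype.mem_piFinset]
  rw [key, Fintype.card_piFinset]
  have h3 : ∀ i, (Finset.univ.filter (fun y : F => (i ∈ A → y = 0 ∨ y = u) ∧
        (i ∈ B → w * y = 0 ∨ w * y = u))).card
      = (if i ∈ (A ∪ B)ᶜ then 4 else 1) * ((if i ∈ A \ B then 2 else 1) *
        (if i ∈ B \ A then 2 else 1)) := by
    intro i
    by_cases h : i ∈ A <;> by_cases h' : i ∈ B <;> simp [h, h', h0, hF]
    · rw [Finset.card_eq_one]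
      refine ⟨0, ?_⟩
      ext y
      simp only [Finset.mem_filter, Finset.mem_univ, true_and, Finset.mem_singleton]
      constructor
      · rintro ⟨h | h, h' | h'⟩
        · exact h
        · exact h
        · exact h'
        · exfalso
          rw [h] at h'
          apply h1
          exact mul_right_cancel₀ hu (by rw [h', one_mul])
      · intro h; simp [h]
    · have : (Finset.univ.filter (fun y : F => y = 0 ∨ y = u)) = {0, u} := by
        ext y; simp
      rw [this, Finset.card_pair hu.symm]
    · have : (Finset.univ.filter (fun y : F => y = 0 ∨ w * y = u)) = {0, w⁻¹ * u} := by
        ext y; simp [eq_inv_mul_iff_mul_eq₀ h0]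
      rw [this, Finset.card_pair]
      exact (mul_ne_zero (inv_ne_zero h0) hu).symm
  simp only [h3]
  rw [Finset.prod_mul_distrib, Finset.prod_mul_distrib, Finset.prod_ite_mem, Finset.prod_ite_mem,
    Finset.prod_ite_mem]
  simp only [Finset.univ_inter, Finset.prod_const, Finset.card_compl, Fintype.card_fin, pow_add]

/-- The rank-one vectors. -/
def T1 {m : ℕ} (w : F) (A B : Finset (Fin m)) : Finset (Fin m → F) :=
  (Finset.univ.erase (0 : F)).biUnion (fun u => Nset w A B u \ Nset w A B 0)

theorem Nset_zero_subset {m : ℕ} (w : F) (A B : Finset (Fin m)) (u : F) :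
    Nset w A B 0 ⊆ Nset w A B u := by
  intro x hx
  simp only [Nset, Finset.mem_filter, Finset.mem_univ, true_and, or_self] at *
  exact fun i => ⟨fun h => Or.inl ((hx i).1 h), fun h => Or.inl ((hx i).2 h)⟩

theorem card_T1 (h2 : (2 : F) = 0) (hF : Fintype.card F = 4) {w : F} (h0 : w ≠ 0) (h1 : w ≠ 1)
    {m : ℕ} (A B : Finset (Fin m)) :
    (T1 w A B).card = 4 ^ (m - (A ∪ B).card) * 3 * (2 ^ ((A \ B).card + (B \ A).card) - 1) := by
  rw [T1, Finset.card_biUnion]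
  · have : ∀ u ∈ Finset.univ.erase (0 : F), (Nset w A B u \ Nset w A B 0).card
        = 4 ^ (m - (A ∪ B).card) * (2 ^ ((A \ B).card + (B \ A).card) - 1) := by
      intro u hu
      rw [Finset.card_sdiff_of_subset (Nset_zero_subset w A B u), card_Nset_zero hF h0,
        card_Nset h2 hF h0 h1 A B (Finset.ne_of_mem_erase hu), Nat.mul_sub, mul_one]
    rw [Finset.sum_congr rfl this, Finset.sum_const, Finset.card_erase_of_mem (Finset.mem_univ _),
      Finset.card_univ, hF]
    simp; ring
  · intro u _ v _ huv
    rw [Function.onFun, Finset.disjoint_left]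
    intro x hx hx'
    rw [Finset.mem_sdiff] at hx hx'
    apply hx.2
    have a := hx.1
    have b := hx'.1
    simp only [Nset, Finset.mem_filter, Finset.mem_univ, true_and, or_self] at *
    intro i
    constructor
    · intro hi
      rcases (a i).1 hi with h | h
      · exact h
      rcases (b i).1 hi with h' | h'
      · exact h'
      exact absurd (h.symm.trans h') huv
    · intro hi
      rcases (a i).2 hi with h | h
      · exact h
      rcases (b i).2 hi with h' | h'
      · exact h'
      exact absurd (h.symm.trans h') huv

theorem card_Hu (h2 : (2 : F) = 0) {u : F} (hu : u ≠ 0) : Nat.card (Hu h2 u) = 2 := by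
  have : ((Hu h2 u : AddSubgroup F) : Set F) = ({0, u} : Set F) := by
    ext y; simp [mem_Hu]
  change Nat.card ((Hu h2 u : AddSubgroup F) : Set F) = 2
  rw [this, Nat.card_coe_set_eq, Set.ncard_pair hu.symm]

theorem card_R_zero (h2 : (2 : F) = 0) {m : ℕ} {w : F} {A B : Finset (Fin m)} {x : Fin m → F}
    (hx : x ∈ Nset w A B 0) : Nat.card ((pairSub A B).map (phiHom h2 w x)) = 1 := by
  rw [mem_Nset h2] at hx
  rw [AddSubgroup.card_eq_one, eq_bot_iff]
  intro y hy
  have := hx hy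
  rw [mem_Hu] at this
  simpa using this

theorem card_R_one (h2 : (2 : F) = 0) {m : ℕ} {w : F} {A B : Finset (Fin m)} {x : Fin m → F}
    (hx : x ∈ T1 w A B) : Nat.card ((pairSub A B).map (phiHom h2 w x)) = 2 := by
  simp only [T1, Finset.mem_biUnion, Finset.mem_sdiff, Finset.mem_erase] at hx
  obtain ⟨u, ⟨hu, -⟩, hxu, hx0⟩ := hx
  rw [mem_Nset h2] at hxu hx0
  have hd := AddSubgroup.card_dvd_of_le hxu
  rw [card_Hu h2 hu, Nat.dvd_prime Nat.prime_two] at hd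
  rcases hd with hd | hd
  · exfalso
    apply hx0
    rw [AddSubgroup.card_eq_one] at hd
    rw [hd]; exact bot_le
  · exact hd

theorem card_R_two (h2 : (2 : F) = 0) (hF : Fintype.card F = 4) {m : ℕ} {w : F}
    {A B : Finset (Fin m)} {x : Fin m → F}
    (hx0 : x ∉ Nset w A B 0) (hx : x ∉ T1 w A B) :
    Nat.card ((pairSub A B).map (phiHom h2 w x)) = 4 := by
  have hd := AddSubgroup.card_addSubgroup_dvd_card ((pairSub A B).map (phiHom h2 w x))
  rw [Nat.card_eq_fintype_card (α := F), hF] at hd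
  have hle : Nat.card ((pairSub A B).map (phiHom h2 w x)) ≤ 4 := Nat.le_of_dvd (by norm_num) hd
  generalize hR : (pairSub A B).map (phiHom h2 w x) = R at *
  have hn1 : Nat.card R ≠ 1 := by
    intro h
    rw [AddSubgroup.card_eq_one] at h
    apply hx0
    rw [mem_Nset h2, hR, h]; exact bot_le
  have hn2 : Nat.card R ≠ 2 := by
    intro h
    have hne : R ≠ ⊥ := by
      rintro rfl
      simp at h
    obtain ⟨u, huR, hu⟩ := (AddSubgroup.ne_bot_iff_exists_ne_zero.mp hne) |> fun ⟨a, ha⟩ =>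
      (⟨a.1, a.2, fun h => ha (Subtype.ext h)⟩ : ∃ u, u ∈ R ∧ u ≠ 0)
    have hle : Hu h2 u ≤ R := by
      rintro y (rfl | rfl)
      · exact R.zero_mem
      · exact huR
    have heq : Hu h2 u = R := by
      apply AddSubgroup.eq_of_le_of_card_ge hle
      rw [h, card_Hu h2 hu]
    apply hx
    simp only [T1, Finset.mem_biUnion, Finset.mem_sdiff, Finset.mem_erase]
    refine ⟨u, ⟨hu, Finset.mem_univ _⟩, ?_, hx0⟩
    rw [mem_Nset h2, hR, heq]
  have hn3 : Nat.card R ≠ 3 := by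
    intro h
    rw [h] at hd; revert hd; decide
  have hn0 : Nat.card R ≠ 0 := by
    intro h
    rw [h] at hd; revert hd; decide
  omega

theorem wtF_D (h2 : (2 : F) = 0) {w : F} (hw : w ^ 2 + w + 1 = 0) {m : ℕ} (A B : Finset (Fin m))
    (x : Fin m → F) : ∃ k, wtF ((delta A ×ˢ delta B).image (dvec w)) x + k = 2 ^ (A.card + B.card)
      ∧ k * Nat.card ((pairSub A B).map (phiHom h2 w x)) = 2 ^ (A.card + B.card) := by
  have hc : (delta A ×ˢ delta B).card = 2 ^ (A.card + B.card) := by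
    rw [Finset.card_product, card_delta, card_delta, pow_add]
  refine ⟨((delta A ×ˢ delta B).filter (fun p => phiHom h2 w x p = 0)).card, ?_, ?_⟩
  · rw [wtF, Finset.filter_image, Finset.card_image_of_injective _ (dvec_inj h2 hw), ← hc,
      add_comm]
    exact Finset.card_filter_add_card_filter_not (fun p => phiHom h2 w x p = 0)
  · rw [← hc]
    exact rank_nullity (pairSub A B) _ (fun p => Iff.rfl) _

theorem wtF_univ (hF : Fintype.card F = 4) {m : ℕ} (hm : 1 ≤ m) {x : Fin m → F} (hx : x ≠ 0) :
    wtF Finset.univ x = 3 * 2 ^ (2 * m - 2) := by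
  have h := rank_nullity (⊤ : AddSubgroup (Fin m → F)) Finset.univ (by simp) (dotHom x)
  have hs : (⊤ : AddSubgroup (Fin m → F)).map (dotHom x) = ⊤ := by
    rw [← AddMonoidHom.range_eq_map, AddMonoidHom.range_eq_top]
    intro y
    obtain ⟨i, hi⟩ := Function.ne_iff.mp hx
    refine ⟨Pi.single i ((x i)⁻¹ * y), ?_⟩
    change dotF _ _ = _
    rw [dotF, Finset.sum_eq_single i]
    · rw [Pi.single_eq_same, mul_inv_cancel_left₀ hi]
    · intro j _ hj
      simp [hj]
    · simp
  have hf := Finset.card_filter_add_card_filter_not (s := Finset.univ) (fun d => dotHom x d = 0)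
  rw [hs, AddSubgroup.card_top, Nat.card_eq_fintype_card, hF] at h
  rw [Finset.card_univ, Fintype.card_fun, hF, Fintype.card_fin] at h hf
  have e : 4 ^ m = 4 * 2 ^ (2 * m - 2) := by
    obtain ⟨n, rfl⟩ := Nat.exists_eq_add_of_le' hm
    rw [show 2 * (n + 1) - 2 = 2 * n by omega, pow_mul, pow_succ]; ring
  have : wtF Finset.univ x = (Finset.univ.filter (fun d => ¬ dotHom x d = 0)).card := rfl
  omega

theorem wtF_compl {m : ℕ} (D : Finset (Fin m → F)) (x : Fin m → F) :
    wtF ((Finset.univ.erase 0) \ D) x + wtF D x = wtF Finset.univ x := by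
  have h : (Finset.univ.filter (fun d => dotF x d ≠ 0)) =
      (((Finset.univ.erase 0) \ D).filter (fun d => dotF x d ≠ 0)) ∪
        (D.filter (fun d => dotF x d ≠ 0)) := by
    ext d
    simp only [Finset.mem_filter, Finset.mem_univ, true_and, Finset.mem_union, Finset.mem_sdiff,
      Finset.mem_erase, and_true]
    by_cases hd : d ∈ D
    · simp [hd]
    · simp only [hd, not_false_eq_true, and_true, false_and, or_false]
      constructor
      · intro h
        refine ⟨?_, h⟩
        rintro rfl
        apply h
        simp [dotF]
      · exact fun h => h.2
  unfold wtF
  rw [h, Finset.card_union_of_disjoint]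
  apply Finset.disjoint_filter_filter
  exact Finset.sdiff_disjoint

theorem griesmer_nat (m k : ℕ) (h : k + 3 ≤ 2 * m) :
    ∑ i ∈ Finset.range m, (3 * 2 ^ k) / 4 ^ i + 1 = 2 ^ (k + 2) := by
  induction m generalizing k with
  | zero => omega
  | succ m ih =>
    rw [Finset.sum_range_succ']
    by_cases hk : 2 ≤ k
    · obtain ⟨j, rfl⟩ := Nat.exists_eq_add_of_le' hk
      have h1 := ih j (by omega)
      have h3 : ∀ i, 3 * 2 ^ (j + 2) / 4 ^ (i + 1) = 3 * 2 ^ j / 4 ^ i := by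
        intro i
        rw [show 3 * 2 ^ (j + 2) = (3 * 2 ^ j) * 4 by ring, pow_succ,
          Nat.mul_div_mul_right _ _ (by norm_num)]
      simp only [h3]
      have : 2 ^ (j + 2 + 2) = 4 * 2 ^ (j + 2) := by ring
      have : 2 ^ (j + 2) = 4 * 2 ^ j := by ring
      simp
      omega
    · have hk' : k = 0 ∨ k = 1 := by omega
      rcases hk' with rfl | rfl
      · have : ∀ i, 3 * 2 ^ 0 / 4 ^ (i + 1) = 0 := by
          intro i
          apply Nat.div_eq_of_lt
          have : 1 ≤ 4 ^ i := Nat.one_le_pow _ _ (by norm_num)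
          rw [pow_succ]; omega
        simp only [this]
        norm_num
      · obtain ⟨n, rfl⟩ := Nat.exists_eq_add_of_le' (show 1 ≤ m by omega)
        rw [Finset.sum_range_succ']
        have : ∀ i, 3 * 2 ^ 1 / 4 ^ (i + 1 + 1) = 0 := by
          intro i
          apply Nat.div_eq_of_lt
          have : 1 ≤ 4 ^ i := Nat.one_le_pow _ _ (by norm_num)
          rw [pow_succ, pow_succ]; omega
        simp only [this]
        norm_num

theorem geom_nat (m : ℕ) : ∑ i ∈ Finset.range m, 3 * 4 ^ (m - 1 - i) + 1 = 4 ^ m := by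
  rw [Finset.sum_range_reflect (fun i => 3 * 4 ^ i) m]
  induction m with
  | zero => simp
  | succ m ih => rw [Finset.sum_range_succ, pow_succ]; omega

theorem griesmer_sum (m n : ℕ) (hm : 1 ≤ m) (h : 2 ≤ n) (h' : n ≤ 2 * m - 1) :
    ∑ i ∈ Finset.range m, ⌈((3 * 2 ^ (2 * m - 2) - 3 * 2 ^ (n - 2) : ℚ)) / 4 ^ i⌉
        = (4 ^ m - 2 ^ n : ℤ) := by
  obtain ⟨k, rfl⟩ := Nat.exists_eq_add_of_le' h
  have h1 := griesmer_nat m k (by omega)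
  have h2 := geom_nat m
  have key : ∀ i ∈ Finset.range m,
      ⌈((3 * 2 ^ (2 * m - 2) - 3 * 2 ^ (k + 2 - 2) : ℚ)) / 4 ^ i⌉
        = ((3 * 4 ^ (m - 1 - i) : ℕ) : ℤ) - ((3 * 2 ^ k / 4 ^ i : ℕ) : ℤ) := by
    intro i hi
    rw [Finset.mem_range] at hi
    have e : (3 * 2 ^ (2 * m - 2) - 3 * 2 ^ (k + 2 - 2) : ℚ) / 4 ^ i
        = (((3 * 4 ^ (m - 1 - i) : ℕ) : ℤ) : ℚ) + -(((3 * 2 ^ k : ℕ) : ℚ) / ((4 ^ i : ℕ) : ℚ)) := by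
      have : (2 : ℚ) ^ (2 * m - 2) = 4 ^ (m - 1 - i) * 4 ^ i := by
        rw [← pow_add, show m - 1 - i + i = m - 1 by omega, show 2 * m - 2 = 2 * (m - 1) by omega,
          pow_mul]
        norm_num
      rw [this]
      push_cast
      field_simp
      ring_nf
      try simp
    rw [e, Int.ceil_intCast_add, Int.ceil_neg, Rat.floor_natCast_div_natCast]
    push_cast
    ring
  rw [Finset.sum_congr rfl key, Finset.sum_sub_distrib, ← Nat.cast_sum, ← Nat.cast_sum]
  have h1' : ((∑ i ∈ Finset.range m, (3 * 2 ^ k) / 4 ^ i : ℕ) : ℤ) + 1 = 2 ^ (k + 2) := by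
    exact_mod_cast h1
  have h2' : ((∑ i ∈ Finset.range m, 3 * 4 ^ (m - 1 - i) : ℕ) : ℤ) + 1 = 4 ^ m := by
    exact_mod_cast h2
  linarith

theorem map_val_const {α : Type} (s : Finset α) (f : α → ℕ) (c : ℕ) (h : ∀ x ∈ s, f x = c) :
    s.val.map f = Multiset.replicate s.card c := by
  rw [Multiset.eq_replicate]
  refine ⟨by simp, ?_⟩
  intro b hb
  rw [Multiset.mem_map] at hb
  obtain ⟨a, ha, rfl⟩ := hb
  exact h a ha

theorem union_val_of_disjoint {α : Type} [DecidableEq α] {s t : Finset α} (h : Disjoint s t) :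
    (s ∪ t).val = s.val + t.val := by
  rw [← Finset.disjUnion_eq_union s t h]; rfl

theorem count_pos {m : ℕ} (A B : Finset (Fin m)) (hAB : 2 ≤ A.card + B.card) :
    1 + 3 * (2 ^ ((A \ B).card + (B \ A).card) - 1) < 4 ^ (A ∪ B).card := by
  have e1 := Finset.card_sdiff_add_card_inter A B
  have e2 := Finset.card_sdiff_add_card_inter B A
  have e3 := Finset.card_union_add_card_inter A B
  rw [Finset.inter_comm B A] at e2
  have h1 : (A \ B).card + (B \ A).card + (A ∩ B).card = (A ∪ B).card := by omega
  generalize hs : (A \ B).card + (B \ A).card = s at *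
  generalize (A ∪ B).card = a at *
  have hp : 1 ≤ 2 ^ s := Nat.one_le_pow _ _ (by norm_num)
  have h4 : 4 ^ a = 2 ^ a * 2 ^ a := by rw [← mul_pow]; norm_num
  rcases Nat.eq_zero_or_pos (A ∩ B).card with h | h
  · have : s = a := by omega
    subst this
    have : 2 ^ 2 ≤ 2 ^ s := Nat.pow_le_pow_right (by norm_num) (by omega)
    nlinarith [Nat.sub_add_cancel hp]
  · have : 2 ^ (s + 1) ≤ 2 ^ a := Nat.pow_le_pow_right (by norm_num) (by omega)
    rw [pow_succ] at this
    have h5 : 3 * (2 ^ s - 1) = 3 * 2 ^ s - 3 := by omega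
    rw [h4, h5]
    have : (2 ^ s * 2) * (2 ^ s * 2) ≤ 2 ^ a * 2 ^ a := Nat.mul_le_mul this this
    have : 2 ^ s * 1 ≤ 2 ^ s * 2 ^ s := Nat.mul_le_mul_left _ hp
    have e : (2 ^ s * 2) * (2 ^ s * 2) = 4 * (2 ^ s * 2 ^ s) := by ring
    omega

end Helpers

/-- Theorem 4.4: for `D = Δ_A + wΔ_B` with `2 ≤ |A|+|B| ≤ 2m−1`, the code `C_{D^c}` is a
`[4^m − 2^{|A|+|B|}, m, 3·2^{2m−2} − 3·2^{|A|+|B|−2}]` quaternary code with the stated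
weight distribution, and it is a Griesmer code. -/
theorem quaternary_complement_code_Griesmer {m : ℕ} (hm : 1 ≤ m)
    (hF : Fintype.card F = 4) (w : F) (hw : w ^ 2 + w + 1 = 0)
    (A B : Finset (Fin m)) (hAB : 2 ≤ A.card + B.card) (hAB' : A.card + B.card ≤ 2 * m - 1) :
    ((Finset.univ.erase (0 : Fin m → F)) \ ((delta A ×ˢ delta B).image (dvec w))).card
      = 4 ^ m - 2 ^ (A.card + B.card)
    ∧ (Finset.univ.image
        (fun x : Fin m → F => codeword
          ((Finset.univ.erase (0 : Fin m → F)) \ ((delta A ×ˢ delta B).image (dvec w))) x)).card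
      = 4 ^ m
    ∧ ((∀ x : Fin m → F,
          wtF ((Finset.univ.erase (0 : Fin m → F)) \ ((delta A ×ˢ delta B).image (dvec w))) x = 0
          ∨ 3 * 2 ^ (2 * m - 2) - 3 * 2 ^ (A.card + B.card - 2)
            ≤ wtF ((Finset.univ.erase (0 : Fin m → F)) \ ((delta A ×ˢ delta B).image (dvec w))) x)
       ∧ (∃ x : Fin m → F,
          wtF ((Finset.univ.erase (0 : Fin m → F)) \ ((delta A ×ˢ delta B).image (dvec w))) x
            = 3 * 2 ^ (2 * m - 2) - 3 * 2 ^ (A.card + B.card - 2)))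
    ∧ (Finset.univ.val.map
        (fun x : Fin m → F =>
          wtF ((Finset.univ.erase (0 : Fin m → F)) \ ((delta A ×ˢ delta B).image (dvec w))) x))
      = Multiset.replicate 1 0
        + Multiset.replicate (4 ^ (m - (A ∪ B).card)
            * (4 ^ (A ∪ B).card - 1 - 3 * (2 ^ ((A \ B).card + (B \ A).card) - 1)))
          (3 * 2 ^ (2 * m - 2) - 3 * 2 ^ (A.card + B.card - 2))
        + Multiset.replicate (4 ^ (m - (A ∪ B).card) * 3
            * (2 ^ ((A \ B).card + (B \ A).card) - 1))
          (3 * 2 ^ (2 * m - 2) - 2 ^ (A.card + B.card - 1))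
        + Multiset.replicate (4 ^ (m - (A ∪ B).card) - 1) (3 * 2 ^ (2 * m - 2))
    ∧ (∑ i ∈ Finset.range m,
        ⌈((3 * 2 ^ (2 * m - 2) - 3 * 2 ^ (A.card + B.card - 2) : ℚ)) / 4 ^ i⌉
        = (4 ^ m - 2 ^ (A.card + B.card) : ℤ)) := by
  have h2 : (2 : F) = 0 := two_eq_zero_F hF
  have h0 := w_ne_zero hw
  have h1 := w_ne_one h2 hw
  have hDc : ((delta A ×ˢ delta B).image (dvec w)).card = 2 ^ (A.card + B.card) := by
    rw [Finset.card_image_of_injective _ (dvec_inj h2 hw), Finset.card_product, card_delta,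
      card_delta, pow_add]
  have h0D : (0 : Fin m → F) ∈ (delta A ×ˢ delta B).image (dvec w) := by
    rw [Finset.mem_image]
    refine ⟨0, by simp [mem_delta], ?_⟩
    funext i
    simp [dvec, e2_zero]
  have hwD := wtF_D h2 hw A B
  have hcompl := wtF_compl ((delta A ×ˢ delta B).image (dvec w))
  generalize (delta A ×ˢ delta B).image (dvec w) = D at *
  obtain ⟨k, hk⟩ := Nat.exists_eq_add_of_le' hAB
  have hk1 : 2 ^ (A.card + B.card) = 4 * 2 ^ k := by rw [hk]; ring
  have hk2 : 2 ^ (A.card + B.card - 1) = 2 * 2 ^ k := by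
    rw [hk, show k + 2 - 1 = k + 1 by omega]; ring
  have hk3 : 2 ^ (A.card + B.card - 2) = 2 ^ k := by
    rw [hk, show k + 2 - 2 = k by omega]
  have hlt : 2 ^ k < 2 ^ (2 * m - 2) := Nat.pow_lt_pow_right (by norm_num) (by omega)
  have hkpos : 0 < 2 ^ k := by positivity
  have hcard : Fintype.card (Fin m → F) = 4 ^ m := by
    rw [Fintype.card_fun, hF, Fintype.card_fin]
  have hW0 : wtF (univ.erase 0 \ D) (0 : Fin m → F) = 0 := by
    simp [wtF, dotF]
  have hWz : ∀ x ∈ Nset w A B 0, x ≠ 0 → wtF (univ.erase 0 \ D) x = 3 * 2 ^ (2 * m - 2) := by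
    intro x hx hx0
    obtain ⟨j, hj1, hj2⟩ := hwD x
    have := hcompl x
    rw [wtF_univ hF hm hx0] at this
    rw [card_R_zero h2 hx] at hj2
    omega
  have hz : (0 : Fin m → F) ∈ Nset w A B 0 := by simp [Nset]
  have hT1N : ∀ x ∈ T1 w A B, x ∉ Nset w A B 0 := by
    intro x hx
    simp only [T1, Finset.mem_biUnion, Finset.mem_sdiff] at hx
    obtain ⟨_, _, _, h⟩ := hx
    exact h
  have hW1 : ∀ x ∈ T1 w A B, wtF (univ.erase 0 \ D) x
      = 3 * 2 ^ (2 * m - 2) - 2 ^ (A.card + B.card - 1) := by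
    intro x hx
    have hx0 : x ≠ 0 := by
      rintro rfl; exact hT1N _ hx hz
    obtain ⟨j, hj1, hj2⟩ := hwD x
    have := hcompl x
    rw [wtF_univ hF hm hx0] at this
    rw [card_R_one h2 hx] at hj2
    omega
  have hW2 : ∀ x, x ∉ Nset w A B 0 → x ∉ T1 w A B → wtF (univ.erase 0 \ D) x
      = 3 * 2 ^ (2 * m - 2) - 3 * 2 ^ (A.card + B.card - 2) := by
    intro x hx hx'
    have hx0 : x ≠ 0 := by
      rintro rfl; exact hx hz
    obtain ⟨j, hj1, hj2⟩ := hwD x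
    have := hcompl x
    rw [wtF_univ hF hm hx0] at this
    rw [card_R_two h2 hF hx hx'] at hj2
    omega
  have hmin : ∀ x : Fin m → F, x ≠ 0 → 3 * 2 ^ (2 * m - 2) - 3 * 2 ^ (A.card + B.card - 2)
      ≤ wtF (univ.erase 0 \ D) x := by
    intro x hx0
    by_cases hx : x ∈ Nset w A B 0
    · rw [hWz x hx hx0]; omega
    by_cases hx' : x ∈ T1 w A B
    · rw [hW1 x hx']; omega
    rw [hW2 x hx hx']
  have hcN := card_Nset_zero hF h0 A B
  have hcT := card_T1 h2 hF h0 h1 A B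
  have hpos := count_pos A B hAB
  have ham : (A ∪ B).card ≤ m := by
    simpa using Finset.card_le_univ (A ∪ B)
  have hdisj : Disjoint (Nset w A B 0) (T1 w A B) :=
    Finset.disjoint_left.mpr fun x hx hx' => hT1N x hx' hx
  have hcT2 : (univ \ (Nset w A B 0 ∪ T1 w A B)).card = 4 ^ (m - (A ∪ B).card)
      * (4 ^ (A ∪ B).card - 1 - 3 * (2 ^ ((A \ B).card + (B \ A).card) - 1)) := by
    rw [Finset.card_sdiff_of_subset (Finset.subset_univ _), Finset.card_union_of_disjoint hdisj,
      hcN, hcT, Finset.card_univ, hcard]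
    generalize 2 ^ ((A \ B).card + (B \ A).card) - 1 = t
    rw [Nat.mul_sub, Nat.mul_sub, ← pow_add,
      Nat.sub_add_cancel ham, mul_one, Nat.sub_sub, mul_assoc]
  refine ⟨?_, ?_, ⟨?_, ?_⟩, ?_, ?_⟩
  · have e : univ.erase (0 : Fin m → F) \ D = univ \ D := by
      ext d
      simp only [Finset.mem_sdiff, Finset.mem_erase, Finset.mem_univ, and_true, true_and]
      refine ⟨fun h => h.2, fun h => ⟨?_, h⟩⟩
      rintro rfl
      exact h h0D
    rw [e, Finset.card_sdiff_of_subset (Finset.subset_univ _), Finset.card_univ, hcard, hDc]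
  · rw [Finset.card_image_of_injective, Finset.card_univ, hcard]
    intro x y hxy
    by_contra hne
    have := hmin (x - y) (sub_ne_zero.mpr hne)
    have hz : wtF (univ.erase 0 \ D) (x - y) = 0 := by
      rw [wtF, Finset.card_eq_zero, Finset.filter_eq_empty_iff]
      intro d hd
      have := congrFun hxy ⟨d, hd⟩
      simp only [codeword] at this
      rw [dotF_sub_left, this, sub_self]
      simp
    omega
  · intro x
    by_cases hx : x = 0
    · left; rw [hx, hW0]
    · right; exact hmin x hx
  · have : 0 < (univ \ (Nset w A B 0 ∪ T1 w A B)).card := by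
      rw [hcT2]
      apply Nat.mul_pos (by positivity)
      omega
    obtain ⟨x, hx⟩ := Finset.card_pos.mp this
    simp only [Finset.mem_sdiff, Finset.mem_union, not_or] at hx
    exact ⟨x, hW2 x hx.2.1 hx.2.2⟩
  · have e : (univ : Finset (Fin m → F)).val = ({0} : Finset (Fin m → F)).val
        + (univ \ (Nset w A B 0 ∪ T1 w A B)).val + (T1 w A B).val
        + ((Nset w A B 0).erase 0).val := by
      have e1 : (Nset w A B 0).val = ({0} : Finset (Fin m → F)).val
          + ((Nset w A B 0).erase 0).val := by
        rw [← union_val_of_disjoint, ← Finset.insert_eq, Finset.insert_erase hz]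
        simp
      have e2 : (univ : Finset (Fin m → F)).val = (univ \ (Nset w A B 0 ∪ T1 w A B)).val
          + ((Nset w A B 0).val + (T1 w A B).val) := by
        rw [← union_val_of_disjoint hdisj, ← union_val_of_disjoint Finset.sdiff_disjoint,
          Finset.sdiff_union_of_subset (Finset.subset_univ _)]
      rw [e2, e1]
      abel
    rw [e, Multiset.map_add, Multiset.map_add, Multiset.map_add]
    congr 1
    · congr 1
      · congr 1
        · simp [hW0]
        · rw [← hcT2]
          apply map_val_const
          intro x hx
          simp only [Finset.mem_sdiff, Finset.mem_union, not_or] at hx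
          exact hW2 x hx.2.1 hx.2.2
      · rw [← hcT]
        exact map_val_const _ _ _ hW1
    · rw [← hcN, ← Finset.card_erase_of_mem hz]
      apply map_val_const
      intro x hx
      exact hWz x (Finset.mem_of_mem_erase hx) (Finset.ne_of_mem_erase hx)
  · exact griesmer_sum m _ hm hAB hAB'
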